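/- Let A be a k-algebra, σ a k-algebra automorphism of A, δ a σ-derivation, E = A[x;σ,δ], and let ψ'_n: E ⊗ A^{⊗n} ⊗ ^{σ⁻¹}E → E ⊗ A^{⊗n} ⊗ E be the E-E-bilinear chain maps between the two bar-type complexes with differentials b'_{1} and b'_{0}, given by ψ'_n(1⊗a_1⊗…⊗a_n⊗1) = x⊗σ⁻¹(a_1)⊗…⊗σ⁻¹(a_n)⊗1 − 1⊗a_1⊗…⊗a_n⊗x − Σ_{j=1}^{n} 1⊗a_1⊗…⊗a_{j−1}⊗δσ⁻¹(a_j)⊗σ⁻¹(a_{j+1})⊗…⊗σ⁻¹(a_n)⊗1. Form the mapping cone complex C with C_0 = E ⊗ E, C_n = (E ⊗ A^{⊗(n−1)} ⊗ ^{σ⁻¹}E) ⊕ (E ⊗ A^{⊗n} ⊗ E) for n ≥ 1, and differential d_n(p, p') = (−b'_{1,n−1}(p), b'_{0,n}(p') − ψ'_{n−1}(p)). Then the augmented complex C → E → 0, with augmentation the multiplication μ: E ⊗ E → E, is exact. If, moreover, A is projective as a k-module, then this augmented complex is a resolution of E by projective E ⊗_k E^op-modules. -/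

import Mathlib

open scoped TensorProduct
open CategoryTheory

noncomputable section
set_option synthInstance.maxHeartbeats 1000000
set_option maxHeartbeats 1000000

/-- `E` is an Ore extension `A[x; σ, δ]` of `A` (with `σ` an automorphism): `A` embeds in `E`
via `ι`, the powers of `x` form a basis of `E` as a left `A`-module, `x a = σ(a) x + δ(a)`,
and `δ` is a `σ`-derivation. -/
structure IsOreExtension (k : Type) [CommRing k] (A : Type) [Ring A] [Algebra k A]
    (E : Type) [Ring E] [Algebra k E] (σ : A ≃ₐ[k] A) (δ : A →ₗ[k] A)
    (ι : A →ₐ[k] E) (x : E) : Prop where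
  isDerivation : ∀ a b : A, δ (a * b) = δ a * b + σ a * δ b
  commRule : ∀ a : A, x * ι a = ι (σ a) * x + ι (δ a)
  spans : ∀ e : E, ∃ c : ℕ →₀ A, e = c.sum fun i a => ι a * x ^ i
  indep : ∀ c : ℕ →₀ A, (c.sum fun i a => ι a * x ^ i) = 0 → c = 0

section Bar

/-- Merging of two adjacent entries of a tuple: `(a_0, …, a_n) ↦
(a_0, …, a_{i-1}, a_i * a_{i+1}, a_{i+2}, …, a_n)`. -/
def mergeAt {A : Type} [Mul A] {n : ℕ} (a : Fin (n + 1) → A) (i : Fin n) : Fin n → A :=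
  fun j =>
    if (j : ℕ) < (i : ℕ) then a (Fin.castSucc j)
    else if (j : ℕ) = (i : ℕ) then a (Fin.castSucc j) * a (Fin.succ j)
    else a (Fin.succ j)

variable (k : Type) [CommRing k] (A : Type) [Ring A] [Algebra k A]
  (E : Type) [Ring E] [Algebra k E]

/-- The `n`-th term `E ⊗ A^{⊗n} ⊗ E` of the bar-type complexes. -/
abbrev BarObj (n : ℕ) : Type := (E ⊗[k] TensorPower k n A) ⊗[k] E

end Bar
section Triple

variable (k : Type) [CommRing k] (E : Type) [Ring E] [Algebra k E]
  (X : Type) [AddCommGroup X] [Module k X]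

/-- Left multiplication by elements of `E` on the first factor of `(E ⊗ X) ⊗ E`. -/
def lAlgHom : E →ₐ[k] Module.End k ((E ⊗[k] X) ⊗[k] E) :=
  AlgHom.mk'
    { toFun := fun e => ((LinearMap.mulLeft k e).rTensor X).rTensor E
      map_one' := by ext t u; simp
      map_mul' := fun e f => by ext t u; simp [mul_assoc]
      map_zero' := by ext t u; simp
      map_add' := fun e f => by ext t u; simp [add_mul, TensorProduct.add_tmul] }
    (fun c e => by ext t u; simp [smul_mul_assoc, TensorProduct.smul_tmul'])

/-- Right multiplication by elements of `E` on the last factor of `(E ⊗ X) ⊗ E`. -/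
def rAlgHom : Eᵐᵒᵖ →ₐ[k] Module.End k ((E ⊗[k] X) ⊗[k] E) :=
  AlgHom.mk'
    { toFun := fun z => (LinearMap.mulRight k z.unop).lTensor (E ⊗[k] X)
      map_one' := by ext t u; simp
      map_mul' := fun z w => by ext t u; simp [mul_assoc]
      map_zero' := by ext t u; simp
      map_add' := fun z w => by ext t u; simp [mul_add, TensorProduct.tmul_add] }
    (fun c z => by ext t u; simp [mul_smul_comm, TensorProduct.tmul_smul])

/-- The outer `E^e = E ⊗ Eᵐᵒᵖ`-module structure on `(E ⊗ X) ⊗ E`: the first factor is acted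
on by left multiplication and the last factor by right multiplication. -/
def tripleModule : Module (E ⊗[k] Eᵐᵒᵖ) ((E ⊗[k] X) ⊗[k] E) :=
  Module.compHom _
    (Algebra.TensorProduct.lift (lAlgHom k E X) (rAlgHom k E X)
      (fun e z => by
        ext t u
        simp [lAlgHom, rAlgHom])).toRingHom

end Triple

/-
Along `ι`, and along `ι ∘ σ⁻¹` as well, `E` is a free left `A`-module on the powers of `x`. Hence
both bar complexes have a contracting homotopy which splits the last factor as `a x^i` and moves `a`
into the tensor power; they resolve `E ⊗_A E` and `E ⊗_A ^{σ⁻¹}E`, both of which are `E[X]` as left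
`E`-modules through `1 ⊗ x^i ↦ X^i`. The map `ψ'` intertwines the two contractions, so it commutes with the differentials,
and it covers right multiplication by `x - X` on `E[X]`. The latter is injective with cokernel `E`
through evaluation at `x`, and the cone of a lift of an injective map between resolutions resolves
the cokernel of that map.
-/

section Homological

variable {R : Type*} [Ring R]

/-- The complex `⋯ → P 2 → P 1 → P 0`, with differentials `d`, resolves `M` through `ε`. -/
structure IsResolution {P : ℕ → Type*} [∀ n, AddCommGroup (P n)] [∀ n, Module R (P n)]
    {M : Type*} [AddCommGroup M] [Module R M]
    (d : ∀ n, P (n + 1) →ₗ[R] P n) (ε : P 0 →ₗ[R] M) : Prop where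
  surjective : Function.Surjective ε
  exact_zero : Function.Exact (d 0) ε
  exact_succ (n : ℕ) : Function.Exact (d (n + 1)) (d n)

/-- The homotopy identities of a contraction `(s, η)` of `⋯ → P 1 → P 0 → M`. That `d` squares to
zero is not included: see `IsContraction.comp_eq_zero`. -/
structure IsContraction {P : ℕ → Type*} [∀ n, AddCommGroup (P n)] [∀ n, Module R (P n)]
    {M : Type*} [AddCommGroup M] [Module R M]
    (d : ∀ n, P (n + 1) →ₗ[R] P n) (ε : P 0 →ₗ[R] M)
    (s : ∀ n, P n →ₗ[R] P (n + 1)) (η : M →ₗ[R] P 0) : Prop where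
  section_aug : ε ∘ₗ η = LinearMap.id
  aug_comp : ε ∘ₗ d 0 = 0
  homotopy_zero (p : P 0) : d 0 (s 0 p) + η (ε p) = p
  homotopy_succ (n : ℕ) (p : P (n + 1)) : d (n + 1) (s (n + 1) p) + s n (d n p) = p

section Contraction

variable {S : Type*}
  {P : ℕ → Type*} [∀ n, AddCommGroup (P n)] [∀ n, Module R (P n)]
  {M : Type*} [AddCommGroup M] [Module R M]
  {d : ∀ n, P (n + 1) →ₗ[R] P n} {ε : P 0 →ₗ[R] M}
  {s : ∀ n, P n →ₗ[R] P (n + 1)} {η : M →ₗ[R] P 0}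
  {act : ∀ n, S → P n →ₗ[R] P n}

/-- The images of the maps `s n` generate each `P (n + 1)` under the operators `act (n + 1) f`. It
plays the role of relative freeness: equivariant maps are determined by their values on the image
of `s`. -/
def GeneratedBy (act : ∀ n, S → P n →ₗ[R] P n) (s : ∀ n, P n →ₗ[R] P (n + 1)) : Prop :=
  ∀ n, ⨆ f, LinearMap.range (act (n + 1) f ∘ₗ s n) = ⊤

lemma GeneratedBy.linearMap_ext (hgen : GeneratedBy act s) {n : ℕ} {N : Type*} [AddCommGroup N]
    [Module R N] {actN : S → N →ₗ[R] N} {F G : P (n + 1) →ₗ[R] N}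
    (hF : ∀ f, F ∘ₗ act (n + 1) f = actN f ∘ₗ F) (hG : ∀ f, G ∘ₗ act (n + 1) f = actN f ∘ₗ G)
    (h : F ∘ₗ s n = G ∘ₗ s n) : F = G := by
  rw [← LinearMap.eqLocus_eq_top, eq_top_iff, ← hgen n, iSup_le_iff]
  rintro f _ ⟨p, rfl⟩
  calc F (act (n + 1) f (s n p)) = actN f (F (s n p)) := LinearMap.congr_fun (hF f) _
    _ = actN f (G (s n p)) := congrArg (actN f) (LinearMap.congr_fun h p)
    _ = G (act (n + 1) f (s n p)) := (LinearMap.congr_fun (hG f) _).symm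

namespace IsContraction

lemma comp_eq_zero (h : IsContraction d ε s η) (hgen : GeneratedBy act s)
    (hd : ∀ n f, d n ∘ₗ act (n + 1) f = act n f ∘ₗ d n) (n : ℕ) : d n ∘ₗ d (n + 1) = 0 := by
  have reduce (n : ℕ) (hs : (d n ∘ₗ d (n + 1)) ∘ₗ s (n + 1) = 0) : d n ∘ₗ d (n + 1) = 0 := by
    refine hgen.linearMap_ext (actN := act n) (fun f => ?_) (fun f => ?_) (by simpa using hs)
    · rw [LinearMap.comp_assoc, hd, ← LinearMap.comp_assoc, hd, LinearMap.comp_assoc]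
    · rw [LinearMap.zero_comp, LinearMap.comp_zero]
  induction n with
  | zero =>
    refine reduce 0 (LinearMap.ext fun p => ?_)
    have hp : d 0 (s 0 (d 0 p)) = d 0 p := by
      simpa [← LinearMap.comp_apply ε, h.aug_comp] using h.homotopy_zero (d 0 p)
    simp [eq_sub_of_add_eq (h.homotopy_succ 0 p), hp]
  | succ n ih =>
    refine reduce (n + 1) (LinearMap.ext fun p => ?_)
    have hp : d (n + 1) (s (n + 1) (d (n + 1) p)) = d (n + 1) p := by
      simpa [← LinearMap.comp_apply (d n), ih] using h.homotopy_succ n (d (n + 1) p)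
    simp [eq_sub_of_add_eq (h.homotopy_succ (n + 1) p), hp]

lemma isResolution (h : IsContraction d ε s η) (hgen : GeneratedBy act s)
    (hd : ∀ n f, d n ∘ₗ act (n + 1) f = act n f ∘ₗ d n) : IsResolution d ε where
  surjective m := ⟨η m, LinearMap.congr_fun h.section_aug m⟩
  exact_zero p := by
    refine ⟨fun hp => ⟨s 0 p, ?_⟩, ?_⟩
    · simpa [hp] using h.homotopy_zero p
    · rintro ⟨q, rfl⟩
      exact LinearMap.congr_fun h.aug_comp q
  exact_succ n p := by
    refine ⟨fun hp => ⟨s (n + 1) p, ?_⟩, ?_⟩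
    · simpa [hp] using h.homotopy_succ n p
    · rintro ⟨q, rfl⟩
      exact LinearMap.congr_fun (h.comp_eq_zero hgen hd n) q

lemma comm_of_comm_homotopy
    {P' : ℕ → Type*} [∀ n, AddCommGroup (P' n)] [∀ n, Module R (P' n)]
    {M' : Type*} [AddCommGroup M'] [Module R M']
    {d' : ∀ n, P' (n + 1) →ₗ[R] P' n} {ε' : P' 0 →ₗ[R] M'}
    {s' : ∀ n, P' n →ₗ[R] P' (n + 1)} {η' : M' →ₗ[R] P' 0} {act' : ∀ n, S → P' n →ₗ[R] P' n}
    (h : IsContraction d ε s η) (h' : IsContraction d' ε' s' η') (hgen : GeneratedBy act s)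
    (hd : ∀ n f, d n ∘ₗ act (n + 1) f = act n f ∘ₗ d n)
    (hd' : ∀ n f, d' n ∘ₗ act' (n + 1) f = act' n f ∘ₗ d' n)
    {ψ : ∀ n, P n →ₗ[R] P' n} {φ : M →ₗ[R] M'}
    (hψ : ∀ n f, ψ n ∘ₗ act n f = act' n f ∘ₗ ψ n)
    (hs : ∀ n, ψ (n + 1) ∘ₗ s n = s' n ∘ₗ ψ n)
    (hη : ψ 0 ∘ₗ η = η' ∘ₗ φ) (hε : ε' ∘ₗ ψ 0 = φ ∘ₗ ε) (n : ℕ) :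
    d' n ∘ₗ ψ (n + 1) = ψ n ∘ₗ d n := by
  have reduce (n : ℕ) (H : ∀ p, d' n (s' n (ψ n p)) = ψ n (d n (s n p))) :
      d' n ∘ₗ ψ (n + 1) = ψ n ∘ₗ d n := by
    refine hgen.linearMap_ext (actN := act' n) (fun f => ?_) (fun f => ?_)
      (LinearMap.ext fun p => ?_)
    · rw [LinearMap.comp_assoc, hψ, ← LinearMap.comp_assoc, hd', LinearMap.comp_assoc]
    · rw [LinearMap.comp_assoc, hd, ← LinearMap.comp_assoc, hψ, LinearMap.comp_assoc]
    · simpa [← LinearMap.comp_apply (ψ (n + 1)), hs] using H p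
  induction n with
  | zero =>
    refine reduce 0 fun p => ?_
    have hp : η' (ε' (ψ 0 p)) = ψ 0 (η (ε p)) := by
      simp only [← LinearMap.comp_apply, hε, ← LinearMap.comp_assoc, hη]
    rw [eq_sub_of_add_eq (h'.homotopy_zero (ψ 0 p)), eq_sub_of_add_eq (h.homotopy_zero p),
      map_sub, hp]
  | succ n ih =>
    refine reduce (n + 1) fun p => ?_
    have hp : s' n (d' n (ψ (n + 1) p)) = ψ (n + 1) (s n (d n p)) :=
      (congrArg (s' n) (LinearMap.congr_fun ih p)).trans (LinearMap.congr_fun (hs n) (d n p)).symm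
    rw [eq_sub_of_add_eq (h'.homotopy_succ n (ψ (n + 1) p)),
      eq_sub_of_add_eq (h.homotopy_succ n p), map_sub, hp]

end IsContraction

end Contraction

section Cone

variable {P Q : ℕ → Type*} [∀ n, AddCommGroup (P n)] [∀ n, Module R (P n)]
  [∀ n, AddCommGroup (Q n)] [∀ n, Module R (Q n)]
  {M N L : Type*} [AddCommGroup M] [Module R M] [AddCommGroup N] [Module R N]
  [AddCommGroup L] [Module R L]

/-- The differential `C₁ → C₀` of the mapping cone of `ψ : P → Q`, whose terms are `C₀ = Q 0` and
`Cₙ₊₁ = P n × Q (n + 1)`. -/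
def coneDOne (dQ : ∀ n, Q (n + 1) →ₗ[R] Q n) (ψ : ∀ n, P n →ₗ[R] Q n) :
    P 0 × Q 1 →ₗ[R] Q 0 :=
  dQ 0 ∘ₗ LinearMap.snd R _ _ - ψ 0 ∘ₗ LinearMap.fst R _ _

/-- The differential `Cₙ₊₂ → Cₙ₊₁` of the mapping cone of `ψ : P → Q`; see `coneDOne`. -/
def coneD (dP : ∀ n, P (n + 1) →ₗ[R] P n) (dQ : ∀ n, Q (n + 1) →ₗ[R] Q n)
    (ψ : ∀ n, P n →ₗ[R] Q n) (n : ℕ) : P (n + 1) × Q (n + 2) →ₗ[R] P n × Q (n + 1) :=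
  (-(dP n ∘ₗ LinearMap.fst R _ _)).prod
    (dQ (n + 1) ∘ₗ LinearMap.snd R _ _ - ψ (n + 1) ∘ₗ LinearMap.fst R _ _)

variable {dP : ∀ n, P (n + 1) →ₗ[R] P n} {εP : P 0 →ₗ[R] M}
  {dQ : ∀ n, Q (n + 1) →ₗ[R] Q n} {εQ : Q 0 →ₗ[R] N}
  {ψ : ∀ n, P n →ₗ[R] Q n} {φ : M →ₗ[R] N} {ρ : N →ₗ[R] L}

@[simp] lemma coneDOne_apply (z : P 0 × Q 1) : coneDOne dQ ψ z = dQ 0 z.2 - ψ 0 z.1 := rfl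

@[simp] lemma coneD_apply (n : ℕ) (z : P (n + 1) × Q (n + 2)) :
    coneD dP dQ ψ n z = (-dP n z.1, dQ (n + 1) z.2 - ψ (n + 1) z.1) := rfl

lemma coneDOne_exact_aug (hP : Function.Surjective εP) (hQ : Function.Exact (dQ 0) εQ)
    (hε : ∀ p, εQ (ψ 0 p) = φ (εP p)) (hφρ : Function.Exact φ ρ) :
    Function.Exact (coneDOne dQ ψ) (ρ ∘ₗ εQ) := by
  intro q
  constructor
  · intro hq
    obtain ⟨m, hm⟩ := (hφρ _).1 hq
    obtain ⟨p, rfl⟩ := hP m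
    obtain ⟨q', hq'⟩ := (hQ (q - ψ 0 p)).1 (by rw [map_sub, hε, hm, sub_self])
    exact ⟨(-p, q'), by simp [hq']⟩
  · rintro ⟨⟨p, q'⟩, rfl⟩
    simp [hQ.apply_apply_eq_zero, hε, hφρ.apply_apply_eq_zero]

lemma coneD_zero_exact (hP : Function.Exact (dP 0) εP) (hQ₀ : Function.Exact (dQ 0) εQ)
    (hQ₁ : Function.Exact (dQ 1) (dQ 0)) (hψ : ∀ p, dQ 0 (ψ 1 p) = ψ 0 (dP 0 p))
    (hε : ∀ p, εQ (ψ 0 p) = φ (εP p)) (hφ : Function.Injective φ) :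
    Function.Exact (coneD dP dQ ψ 0) (coneDOne dQ ψ) := by
  rintro ⟨p, q⟩
  constructor
  · intro hpq
    have hq : dQ 0 q = ψ 0 p := sub_eq_zero.1 hpq
    have hp : εP p = 0 := (map_eq_zero_iff φ hφ).1 <| by
      rw [← hε, ← hq, hQ₀.apply_apply_eq_zero]
    obtain ⟨p', rfl⟩ := (hP p).1 hp
    obtain ⟨q', hq'⟩ := (hQ₁ (q - ψ 1 p')).1 (by rw [map_sub, hψ, hq, sub_self])
    exact ⟨(-p', q'), by simp [hq']⟩
  · rintro ⟨⟨p', q'⟩, h⟩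
    simp [← h, hQ₁.apply_apply_eq_zero, hψ]

lemma coneD_succ_exact {n : ℕ} (hP : Function.Exact (dP (n + 1)) (dP n))
    (hQ : Function.Exact (dQ (n + 2)) (dQ (n + 1)))
    (hψ : ∀ p, dQ (n + 1) (ψ (n + 2) p) = ψ (n + 1) (dP (n + 1) p)) :
    Function.Exact (coneD dP dQ ψ (n + 1)) (coneD dP dQ ψ n) := by
  rintro ⟨p, q⟩
  constructor
  · intro hpq
    obtain ⟨hp, hq⟩ : dP n p = 0 ∧ dQ (n + 1) q = ψ (n + 1) p := by
      simpa [sub_eq_zero] using hpq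
    obtain ⟨p', rfl⟩ := (hP p).1 hp
    obtain ⟨q', hq'⟩ := (hQ (q - ψ (n + 2) p')).1 (by rw [map_sub, hψ, hq, sub_self])
    exact ⟨(-p', q'), by simp [hq']⟩
  · rintro ⟨⟨p', q'⟩, h⟩
    simp [← h, hP.apply_apply_eq_zero, hQ.apply_apply_eq_zero, hψ]

end Cone

end Homological

section BarResolution

/-- The bar term `E ⊗ A^{⊗n} ⊗ E` with its `k`-module structure only. As a tensor product of
rings, `BarObj k A E n` is also a ring, which gives rise to competing `ℤ`-module structures. -/
def BarTerm (k : Type) [CommRing k] (A : Type) [Ring A] [Algebra k A] (E : Type) [Ring E]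
    [Algebra k E] (n : ℕ) : Type :=
  BarObj k A E n

variable {k : Type} [CommRing k] {A : Type} [Ring A] [Algebra k A] {E : Type} [Ring E] [Algebra k E]

namespace BarTerm

variable {n : ℕ}

instance : AddCommGroup (BarTerm k A E n) := inferInstanceAs (AddCommGroup (BarObj k A E n))

instance : Module k (BarTerm k A E n) := inferInstanceAs (Module k (BarObj k A E n))

/-- The canonical bilinear map `(E ⊗ A^{⊗n}) × E → E ⊗ A^{⊗n} ⊗ E`. -/
def tmk (k : Type) [CommRing k] (A : Type) [Ring A] [Algebra k A] (E : Type) [Ring E]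
    [Algebra k E] (n : ℕ) : E ⊗[k] TensorPower k n A →ₗ[k] E →ₗ[k] BarTerm k A E n :=
  TensorProduct.mk k _ E

/-- The pure tensor `e ⊗ a_1 ⊗ ⋯ ⊗ a_n ⊗ f`. -/
def pure (k : Type) [CommRing k] {A : Type} [Ring A] [Algebra k A] {E : Type} [Ring E]
    [Algebra k E] {n : ℕ} (e : E) (a : Fin n → A) (f : E) : BarTerm k A E n :=
  tmk k A E n (e ⊗ₜ[k] PiTensorProduct.tprod k a) f

lemma tmk_tmul_tprod (e : E) (a : Fin n → A) (f : E) :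
    tmk k A E n (e ⊗ₜ[k] PiTensorProduct.tprod k a) f = pure k e a f := rfl

lemma pure_add_right (e : E) (a : Fin n → A) (f g : E) :
    pure k e a (f + g) = pure k e a f + pure k e a g :=
  map_add (tmk k A E n _) f g

variable {N : Type*} [AddCommMonoid N] [Module k N]

lemma hom_ext {F G : BarTerm k A E n →ₗ[k] N}
    (h : ∀ e a f, F (pure k e a f) = G (pure k e a f)) : F = G :=
  TensorProduct.ext <| TensorProduct.ext <| LinearMap.ext fun e => PiTensorProduct.ext <|
    MultilinearMap.ext fun a => LinearMap.ext fun f => h e a f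

lemma eq_top_of_pure_mem {W : Submodule k (BarTerm k A E n)} (h : ∀ e a f, pure k e a f ∈ W) :
    W = ⊤ := by
  rw [← W.ker_mkQ, LinearMap.ker_eq_top]
  exact hom_ext fun e a f => (Submodule.Quotient.mk_eq_zero W).2 (h e a f)

/-- The linear map on `E ⊗ A^{⊗n} ⊗ E` induced by a bilinear map on `(E ⊗ A^{⊗n}) × E`. -/
def lift (g : E ⊗[k] TensorPower k n A →ₗ[k] E →ₗ[k] N) : BarTerm k A E n →ₗ[k] N :=
  TensorProduct.lift g

lemma lift_pure (g : E ⊗[k] TensorPower k n A →ₗ[k] E →ₗ[k] N) (e : E) (a : Fin n → A) (f : E) :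
    lift g (pure k e a f) = g (e ⊗ₜ PiTensorProduct.tprod k a) f := rfl

/-- The right action of `E` on the last tensor factor. -/
def mulRight (k : Type) [CommRing k] (A : Type) [Ring A] [Algebra k A] {E : Type} [Ring E]
    [Algebra k E] (n : ℕ) (f : E) : BarTerm k A E n →ₗ[k] BarTerm k A E n :=
  lift ((tmk k A E n).compl₂ (LinearMap.mulRight k f))

lemma mulRight_pure (e : E) (a : Fin n → A) (f g : E) :
    mulRight k A n g (pure k e a f) = pure k e a (f * g) := rfl

end BarTerm

open BarTerm

/-- Appending one more factor, `(a_1 ⊗ ⋯ ⊗ a_n) ⊗ b ↦ a_1 ⊗ ⋯ ⊗ a_n ⊗ b`. -/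
def tensorPowerSnoc (k : Type*) [CommRing k] (A : Type*) [AddCommGroup A] [Module k A] (n : ℕ) :
    TensorPower k n A ⊗[k] A →ₗ[k] TensorPower k (n + 1) A :=
  TensorProduct.lift (PiTensorProduct.lift
    (PiTensorProduct.tprod k : MultilinearMap k (fun _ : Fin (n + 1) => A) _).curryRight)

lemma tensorPowerSnoc_tprod {k A : Type*} [CommRing k] [AddCommGroup A] [Module k A] {n : ℕ}
    (a : Fin n → A) (b : A) :
    tensorPowerSnoc k A n (PiTensorProduct.tprod k a ⊗ₜ[k] b) =
      PiTensorProduct.tprod k (Fin.snoc (α := fun _ => A) a b) := by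
  simp [tensorPowerSnoc]

/-- A basis `(vec i)` of `E` as a left `A`-module along `r : A → E`. It is recorded as a `k`-linear
equivalence because several algebra maps `r` are used at once, so that none of them can supply the
`A`-module structure of `E`. -/
structure LeftBasis (r : A →ₐ[k] E) (I : Type*) where
  equiv : (I →₀ A) ≃ₗ[k] E
  vec : I → E
  equiv_single (i : I) (a : A) : equiv (Finsupp.single i a) = r a * vec i

namespace LeftBasis

variable {r : A →ₐ[k] E} {I : Type*} (b : LeftBasis r I) {n : ℕ}
  {N : Type*} [AddCommMonoid N] [Module k N]

/-- The basis obtained by precomposing `r` with an automorphism of `A`. -/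
def twist (τ : A ≃ₐ[k] A) : LeftBasis (r.comp (τ : A →ₐ[k] A)) I where
  equiv := (Finsupp.mapRange.linearEquiv τ.toLinearEquiv).trans b.equiv
  vec := b.vec
  equiv_single i a := by simp [b.equiv_single]

lemma twist_vec (τ : A ≃ₐ[k] A) (i : I) : (b.twist τ).vec i = b.vec i := rfl

lemma hom_ext {F G : BarTerm k A E n →ₗ[k] N}
    (h : ∀ e a c i, F (pure k e a (r c * b.vec i)) = G (pure k e a (r c * b.vec i))) : F = G := by
  refine BarTerm.hom_ext fun e a f => ?_
  have hcomp : F ∘ₗ tmk k A E n (e ⊗ₜ PiTensorProduct.tprod k a) ∘ₗ b.equiv.toLinearMap =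
      G ∘ₗ tmk k A E n (e ⊗ₜ PiTensorProduct.tprod k a) ∘ₗ b.equiv.toLinearMap :=
    Finsupp.lhom_ext fun i c => by
      simpa [b.equiv_single, tmk_tmul_tprod] using h e a c i
  simpa [tmk_tmul_tprod] using LinearMap.congr_fun hcomp (b.equiv.symm f)

/-- The map out of `E ⊗ A^{⊗n} ⊗ E` given on `E ⊗ A^{⊗n} ⊗ A v_i` by `g i`. -/
def lift (g : I → (E ⊗[k] TensorPower k n A) ⊗[k] A →ₗ[k] N) : BarTerm k A E n →ₗ[k] N :=
  BarTerm.lift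
    ((Finsupp.lsum k fun i => (TensorProduct.curry (g i)).flip) ∘ₗ b.equiv.symm.toLinearMap).flip

lemma lift_pure (g : I → (E ⊗[k] TensorPower k n A) ⊗[k] A →ₗ[k] N) (e : E) (a : Fin n → A)
    (c : A) (i : I) :
    b.lift g (pure k e a (r c * b.vec i)) = g i ((e ⊗ₜ PiTensorProduct.tprod k a) ⊗ₜ c) := by
  simp [lift, BarTerm.lift_pure, ← b.equiv_single]

/-- The contracting homotopy of the bar complex; the sign compensates the one that
`a_{n+1} · v_i` carries in the bar differential. -/
def homotopy (n : ℕ) : BarTerm k A E n →ₗ[k] BarTerm k A E (n + 1) :=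
  ((-1 : ℤ) ^ (n + 1)) • b.lift fun i =>
    (tmk k A E (n + 1)).flip (b.vec i) ∘ₗ
      (tensorPowerSnoc k A n).lTensor E ∘ₗ (TensorProduct.assoc k E _ A).toLinearMap

lemma homotopy_pure (e : E) (a : Fin n → A) (c : A) (i : I) :
    b.homotopy n (pure k e a (r c * b.vec i)) =
      ((-1 : ℤ) ^ (n + 1)) • pure k e (Fin.snoc (α := fun _ => A) a c) (b.vec i) := by
  rw [homotopy, LinearMap.smul_apply, lift_pure]
  simp only [LinearMap.comp_apply, LinearEquiv.coe_coe, TensorProduct.assoc_tmul,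
    LinearMap.lTensor_tmul, tensorPowerSnoc_tprod, LinearMap.flip_apply, tmk_tmul_tprod]

/-- The augmentation `e ⊗ r(c) v_i ↦ e l(c) v_i` of the bar complex onto `E ⊗_A E`, which is
identified with `I →₀ E` by means of the basis. -/
def aug (l : A →ₐ[k] E) : BarTerm k A E 0 →ₗ[k] (I →₀ E) :=
  b.lift fun i => Finsupp.lsingle i ∘ₗ LinearMap.mul' k E ∘ₗ
    TensorProduct.map ((TensorProduct.rid k E).toLinearMap ∘ₗ
      (PiTensorProduct.isEmptyEquiv (Fin 0)).toLinearMap.lTensor E) l.toLinearMap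

lemma aug_pure (l : A →ₐ[k] E) (e : E) (a : Fin 0 → A) (c : A) (i : I) :
    b.aug l (pure k e a (r c * b.vec i)) = Finsupp.single i (e * l c) := by
  simp [aug, lift_pure]

/-- The section `e v_i ↦ e ⊗ v_i` of the augmentation. -/
def augSection : (I →₀ E) →ₗ[k] BarTerm k A E 0 :=
  Finsupp.lsum k fun i =>
    (tmk k A E 0).flip (b.vec i) ∘ₗ
      (TensorProduct.mk k E (TensorPower k 0 A)).flip (PiTensorProduct.tprod k Fin.elim0)

lemma augSection_single (i : I) (e : E) (a : Fin 0 → A) :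
    b.augSection (Finsupp.single i e) = pure k e a (b.vec i) := by
  rw [Subsingleton.elim a Fin.elim0]
  simp [augSection, tmk_tmul_tprod]

lemma aug_comp_augSection (l : A →ₐ[k] E) : b.aug l ∘ₗ b.augSection = LinearMap.id := by
  refine Finsupp.lhom_ext fun i e => ?_
  have hvec : b.vec i = r 1 * b.vec i := by rw [map_one, one_mul]
  rw [LinearMap.comp_apply, b.augSection_single i e Fin.elim0, hvec, aug_pure]
  simp

lemma homotopy_generatedBy (hone : ∃ i, b.vec i = 1) :
    GeneratedBy (P := BarTerm k A E) (mulRight k A) b.homotopy := by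
  obtain ⟨i, hi⟩ := hone
  intro n
  refine BarTerm.eq_top_of_pure_mem fun e a f => Submodule.mem_iSup_of_mem f
    ⟨((-1 : ℤ) ^ (n + 1)) • pure k e (Fin.init a) (r (a (Fin.last n)) * b.vec i), ?_⟩
  rw [map_zsmul, LinearMap.comp_apply, homotopy_pure, map_zsmul, smul_smul, ← mul_pow, hi,
    mulRight_pure, Fin.snoc_init_self]
  simp

end LeftBasis

/-- The family `B` is the bar differential
`e ⊗ a_0 ⊗ ⋯ ⊗ a_n ⊗ f ↦ e l(a_0) ⊗ ⋯ ± e ⊗ ⋯ ⊗ a_i a_{i+1} ⊗ ⋯ ± e ⊗ ⋯ ⊗ r(a_n) f`,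
for `A` acting on the right of the first factor through `l` and on the left of the last one
through `r`. -/
def IsBarDifferential (l r : A →ₐ[k] E)
    (B : (n : ℕ) → (BarTerm k A E (n + 1) →ₗ[k] BarTerm k A E n)) : Prop :=
  ∀ (n : ℕ) (e f : E) (a : Fin (n + 1) → A),
    B n (pure k e a f) = pure k (e * l (a 0)) (Fin.tail a) f
      + ∑ i : Fin n, ((-1 : ℤ) ^ ((i : ℕ) + 1)) • pure k e (mergeAt a i) f
      + ((-1 : ℤ) ^ (n + 1)) • pure k e (Fin.init a) (r (a (Fin.last n)) * f)

section Snoc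

variable {A : Type} {n : ℕ}

lemma tail_snoc (a : Fin (n + 1) → A) (c : A) :
    Fin.tail (Fin.snoc (α := fun _ => A) a c) = Fin.snoc (α := fun _ => A) (Fin.tail a) c := by
  funext j
  cases j using Fin.lastCases with
  | last => simp [Fin.tail]
  | cast j => simp only [Fin.tail, ← Fin.castSucc_succ, Fin.snoc_castSucc]

lemma mergeAt_snoc_castSucc [Mul A] (a : Fin (n + 1) → A) (c : A) (i : Fin n) :
    mergeAt (Fin.snoc (α := fun _ => A) a c) i.castSucc =
      Fin.snoc (α := fun _ => A) (mergeAt a i) c := by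
  funext j
  cases j using Fin.lastCases with
  | last => simp [mergeAt, i.2.not_gt, i.2.ne']
  | cast j => simp only [mergeAt, Fin.snoc_castSucc, Fin.val_castSucc, Fin.succ_castSucc]

lemma mergeAt_snoc_last [Mul A] (a : Fin (n + 1) → A) (c : A) :
    mergeAt (Fin.snoc (α := fun _ => A) a c) (Fin.last n) =
      Fin.snoc (α := fun _ => A) (Fin.init a) (a (Fin.last n) * c) := by
  funext j
  cases j using Fin.lastCases with
  | last => simp [mergeAt]
  | cast j => simp [mergeAt, Fin.init]

end Snoc

namespace IsBarDifferential

variable {l r : A →ₐ[k] E} {B : (n : ℕ) → (BarTerm k A E (n + 1) →ₗ[k] BarTerm k A E n)}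

lemma comp_mulRight (hB : IsBarDifferential l r B) (n : ℕ) (f : E) :
    B n ∘ₗ mulRight k A (n + 1) f = mulRight k A n f ∘ₗ B n := by
  refine BarTerm.hom_ext fun e a g => ?_
  simp only [LinearMap.comp_apply, mulRight_pure, hB n, map_add, map_sum, map_zsmul, mul_assoc]

lemma apply_snoc (hB : IsBarDifferential l r B) {n : ℕ} (e f : E) (a : Fin (n + 1) → A) (c : A) :
    B (n + 1) (pure k e (Fin.snoc (α := fun _ => A) a c) f) =
      pure k (e * l (a 0)) (Fin.snoc (α := fun _ => A) (Fin.tail a) c) f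
      + ∑ i : Fin n, ((-1 : ℤ) ^ ((i : ℕ) + 1)) •
          pure k e (Fin.snoc (α := fun _ => A) (mergeAt a i) c) f
      + ((-1 : ℤ) ^ (n + 1)) •
          pure k e (Fin.snoc (α := fun _ => A) (Fin.init a) (a (Fin.last n) * c)) f
      + ((-1 : ℤ) ^ (n + 2)) • pure k e a (r c * f) := by
  have hzero : (Fin.snoc (α := fun _ => A) a c : Fin (n + 2) → A) 0 = a 0 :=
    Fin.snoc_castSucc (α := fun _ => A) c a 0
  rw [hB (n + 1), Fin.sum_univ_castSucc, Fin.init_snoc, Fin.snoc_last, hzero, tail_snoc,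
    mergeAt_snoc_last]
  simp only [mergeAt_snoc_castSucc, Fin.val_castSucc, Fin.val_last, add_assoc]

variable {I : Type*} (b : LeftBasis r I)

lemma aug_comp (hB : IsBarDifferential l r B) : b.aug l ∘ₗ B 0 = 0 := by
  refine b.hom_ext fun e a c i => ?_
  have hmul : r (a (Fin.last 0)) * (r c * b.vec i) = r (a 0 * c) * b.vec i := by
    rw [map_mul, mul_assoc, Fin.last_zero]
  rw [LinearMap.comp_apply, hB 0, hmul, map_add, map_add, map_zsmul, b.aug_pure, b.aug_pure,
    map_mul, mul_assoc]
  simp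

lemma homotopy_zero (hB : IsBarDifferential l r B) :
    B 0 ∘ₗ b.homotopy 0 + b.augSection ∘ₗ b.aug l = LinearMap.id := by
  refine b.hom_ext fun e a c i => ?_
  have hzero : (Fin.snoc (α := fun _ => A) a c : Fin 1 → A) 0 = c :=
    Fin.snoc_last (α := fun _ => A) c a
  simp only [LinearMap.add_apply, LinearMap.comp_apply, LinearMap.id_apply, b.homotopy_pure,
    b.aug_pure, b.augSection_single i _ a, map_zsmul, hB 0, Fin.init_snoc, Fin.snoc_last, hzero]
  rw [Subsingleton.elim (Fin.tail _) a]
  simp only [Finset.univ_eq_empty, Finset.sum_empty, add_zero, zero_add, pow_one, neg_smul,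
    one_smul]
  module

lemma homotopy_succ (hB : IsBarDifferential l r B) (n : ℕ) :
    B (n + 1) ∘ₗ b.homotopy (n + 1) + b.homotopy n ∘ₗ B n = LinearMap.id := by
  refine b.hom_ext fun e a c i => ?_
  have hmul : r (a (Fin.last n)) * (r c * b.vec i) = r (a (Fin.last n) * c) * b.vec i := by
    rw [map_mul, mul_assoc]
  simp only [LinearMap.add_apply, LinearMap.comp_apply, LinearMap.id_apply, b.homotopy_pure,
    map_zsmul, hB.apply_snoc, hB n, hmul, map_add, map_sum]
  have hsign (p : BarTerm k A E (n + 1)) :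
      ((-1 : ℤ) ^ (n + 1 + 1)) • ((-1 : ℤ) ^ (n + 2)) • p = p := by
    rw [smul_smul, ← mul_pow, neg_one_mul, neg_neg, one_pow, one_smul]
  have hcomm (j : Fin n) := smul_comm (α := BarTerm k A E (n + 1)) ((-1 : ℤ) ^ ((j : ℕ) + 1))
    ((-1 : ℤ) ^ (n + 1))
  rw [smul_add _ _ (_ • pure k e a _), hsign]
  simp only [hcomm, ← Finset.smul_sum]
  module

lemma isContraction (hB : IsBarDifferential l r B) :
    IsContraction (P := BarTerm k A E) B (b.aug l) b.homotopy b.augSection where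
  section_aug := b.aug_comp_augSection l
  aug_comp := hB.aug_comp b
  homotopy_zero := LinearMap.congr_fun (hB.homotopy_zero b)
  homotopy_succ n := LinearMap.congr_fun (hB.homotopy_succ b n)

lemma isResolution (hB : IsBarDifferential l r B) (hone : ∃ i, b.vec i = 1) :
    IsResolution (P := BarTerm k A E) B (b.aug l) :=
  (hB.isContraction b).isResolution (b.homotopy_generatedBy hone) hB.comp_mulRight

end IsBarDifferential

end BarResolution

section Polynomial

open Polynomial

variable (k : Type*) [CommRing k] {E : Type*} [Ring E] [Algebra k E] (x : E)

lemma mulRight_C_sub_X_injective :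
    Function.Injective (LinearMap.mulRight k (C x - X)) := by
  have hreg : IsRightRegular (X - C x) := (monic_X_sub_C x).isRegular.right
  intro p q hpq
  refine hreg (neg_injective ?_)
  simpa only [LinearMap.mulRight_apply, ← mul_neg, neg_sub] using hpq

lemma exists_mul_C_sub_X_add_C_eval (p : E[X]) : ∃ q, q * (C x - X) + C (p.eval x) = p := by
  induction p using Polynomial.induction_on' with
  | add p₁ p₂ h₁ h₂ =>
    obtain ⟨⟨q₁, h₁⟩, ⟨q₂, h₂⟩⟩ := And.intro h₁ h₂
    refine ⟨q₁ + q₂, ?_⟩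
    rw [eval_add, C_add, add_mul, add_add_add_comm, h₁, h₂]
  | monomial n a =>
    induction n generalizing a with
    | zero => exact ⟨0, by simp⟩
    | succ n ih =>
      obtain ⟨q, hq⟩ := ih (a * x)
      refine ⟨q - monomial n a, ?_⟩
      have heval : (monomial (n + 1) a).eval x = (monomial n (a * x)).eval x := by
        simp [mul_assoc, pow_succ']
      rw [heval, sub_mul, sub_add_eq_add_sub, hq, mul_sub, monomial_mul_C, monomial_mul_X,
        sub_sub_cancel]

lemma mulRight_C_sub_X_exact_eval :
    Function.Exact (LinearMap.mulRight k (C x - X)) (Polynomial.eval x) := by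
  intro p
  constructor
  · intro hp
    obtain ⟨q, hq⟩ := exists_mul_C_sub_X_add_C_eval x p
    exact ⟨q, by simpa [hp] using hq⟩
  · rintro ⟨q, rfl⟩
    rw [LinearMap.mulRight_apply, ← neg_sub, mul_neg, eval_neg, eval_mul_X_sub_C, neg_zero]

/-- Finitely supported sequences in `E` as the coefficient sequences of polynomials. -/
def polynomialEquiv (E : Type*) [Ring E] [Algebra k E] : (ℕ →₀ E) ≃ₗ[k] E[X] :=
  (basisMonomials E).repr.symm.restrictScalars k

lemma polynomialEquiv_single (i : ℕ) (e : E) :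
    polynomialEquiv k E (Finsupp.single i e) = monomial i e := by
  simp [polynomialEquiv, smul_monomial]

/-- Right multiplication by `x - X` on polynomials, in terms of their coefficient sequences. -/
def mulSubX : (ℕ →₀ E) →ₗ[k] (ℕ →₀ E) :=
  (polynomialEquiv k E).symm.toLinearMap ∘ₗ LinearMap.mulRight k (C x - X) ∘ₗ
    (polynomialEquiv k E).toLinearMap

/-- Evaluation of polynomials at `x`, in terms of their coefficient sequences. -/
def evalCoeffs : (ℕ →₀ E) →ₗ[k] E :=
  (leval x).restrictScalars k ∘ₗ (polynomialEquiv k E).toLinearMap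

lemma mulSubX_single (i : ℕ) (e : E) :
    mulSubX k x (Finsupp.single i e) = Finsupp.single i (e * x) - Finsupp.single (i + 1) e := by
  apply (polynomialEquiv k E).injective
  rw [map_sub, polynomialEquiv_single, polynomialEquiv_single, mulSubX, LinearMap.comp_apply,
    LinearMap.comp_apply, LinearEquiv.coe_coe, LinearEquiv.coe_coe, LinearEquiv.apply_symm_apply,
    polynomialEquiv_single, LinearMap.mulRight_apply, mul_sub, monomial_mul_C, monomial_mul_X]

lemma evalCoeffs_single (i : ℕ) (e : E) : evalCoeffs k x (Finsupp.single i e) = e * x ^ i := by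
  simp [evalCoeffs, polynomialEquiv_single]

lemma evalCoeffs_surjective : Function.Surjective (evalCoeffs k x) := fun e =>
  ⟨Finsupp.single 0 e, by rw [evalCoeffs_single, pow_zero, mul_one]⟩

lemma mulSubX_injective : Function.Injective (mulSubX k x) :=
  (polynomialEquiv k E).symm.injective.comp <|
    (mulRight_C_sub_X_injective k x).comp (polynomialEquiv k E).injective

lemma mulSubX_exact_evalCoeffs : Function.Exact (mulSubX k x) (evalCoeffs k x) := by
  intro p
  refine (mulRight_C_sub_X_exact_eval k x (polynomialEquiv k E p)).trans ⟨?_, ?_⟩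
  · rintro ⟨q, hq⟩
    exact ⟨(polynomialEquiv k E).symm q, by simp [mulSubX, hq]⟩
  · rintro ⟨q, rfl⟩
    exact ⟨polynomialEquiv k E q, by simp [mulSubX]⟩

end Polynomial

section OreExtension

variable {k : Type} [CommRing k] {A : Type} [Ring A] [Algebra k A] {E : Type} [Ring E]
  [Algebra k E] {σ : A ≃ₐ[k] A} {δ : A →ₗ[k] A} {ι : A →ₐ[k] E} {x : E}

open BarTerm

namespace IsOreExtension

lemma lsum_mulRight_pow_bijective (h : IsOreExtension k A E σ δ ι x) : Function.Bijective
    (Finsupp.lsum k fun i : ℕ => LinearMap.mulRight k (x ^ i) ∘ₗ ι.toLinearMap) :=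
  ⟨(injective_iff_map_eq_zero _).2 h.indep, fun e => (h.spans e).imp fun _ hc => hc.symm⟩

/-- The powers of `x` as a basis of the Ore extension over `A`. -/
def leftBasis (h : IsOreExtension k A E σ δ ι x) : LeftBasis ι ℕ where
  equiv := LinearEquiv.ofBijective _ h.lsum_mulRight_pow_bijective
  vec i := x ^ i
  equiv_single i a := by
    rw [LinearEquiv.ofBijective_apply, Finsupp.lsum_single]
    rfl

lemma leftBasis_vec (h : IsOreExtension k A E σ δ ι x) (i : ℕ) : h.leftBasis.vec i = x ^ i := rfl

lemma mul_symm (h : IsOreExtension k A E σ δ ι x) (a : A) :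
    x * ι (σ.symm a) = ι a * x + ι (δ (σ.symm a)) := by
  rw [h.commRule, σ.apply_symm_apply]

lemma exists_leftBasis_vec_eq_one (h : IsOreExtension k A E σ δ ι x) :
    ∃ i, h.leftBasis.vec i = 1 :=
  ⟨0, pow_zero x⟩

lemma evalCoeffs_comp_aug (h : IsOreExtension k A E σ δ ι x) {μ : BarTerm k A E 0 →ₗ[k] E}
    (hμ : ∀ e f a, μ (pure k e a f) = e * f) : evalCoeffs k x ∘ₗ h.leftBasis.aug ι = μ := by
  refine h.leftBasis.hom_ext fun e a c i => ?_
  rw [LinearMap.comp_apply, LeftBasis.aug_pure, evalCoeffs_single, hμ, h.leftBasis_vec, mul_assoc]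

end IsOreExtension

/-- `a_1 ⊗ ⋯ ⊗ a_{j-1} ⊗ δσ⁻¹(a_j) ⊗ σ⁻¹(a_{j+1}) ⊗ ⋯ ⊗ σ⁻¹(a_n)`, as a tuple: the `j`-th term of
the sum in the Guccione–Guccione chain map. -/
def twistAt (σ : A ≃ₐ[k] A) (δ : A →ₗ[k] A) {n : ℕ} (a : Fin n → A) (j : Fin n) : Fin n → A :=
  fun i => if (i : ℕ) < (j : ℕ) then a i else if i = j then δ (σ.symm (a j)) else σ.symm (a i)

variable {n : ℕ}

lemma twistAt_snoc_castSucc (a : Fin n → A) (c : A) (j : Fin n) :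
    twistAt σ δ (Fin.snoc (α := fun _ => A) a c) j.castSucc =
      Fin.snoc (α := fun _ => A) (twistAt σ δ a j) (σ.symm c) := by
  funext i
  cases i using Fin.lastCases with
  | last => simp [twistAt, j.2.not_gt, (Fin.castSucc_lt_last j).ne']
  | cast i => simp [twistAt]

lemma twistAt_snoc_last (a : Fin n → A) (c : A) :
    twistAt σ δ (Fin.snoc (α := fun _ => A) a c) (Fin.last n) =
      Fin.snoc (α := fun _ => A) a (δ (σ.symm c)) := by
  funext i
  cases i using Fin.lastCases with
  | last => simp [twistAt]
  | cast i => simp [twistAt]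

/-- The family `Ψ` is the Guccione–Guccione map `ψ'`, which compares the bar complexes with last
face `a · f = ι(σ⁻¹ a) f` (source) and `a · f = ι(a) f` (target). -/
def IsOreChainMap (σ : A ≃ₐ[k] A) (δ : A →ₗ[k] A) (x : E)
    (Ψ : (n : ℕ) → (BarTerm k A E n →ₗ[k] BarTerm k A E n)) : Prop :=
  ∀ (n : ℕ) (e f : E) (a : Fin n → A),
    Ψ n (pure k e a f) =
      pure k (e * x) (σ.symm ∘ a) f - pure k e a (x * f) - ∑ j, pure k e (twistAt σ δ a j) f

namespace IsOreChainMap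

variable {Ψ : (n : ℕ) → (BarTerm k A E n →ₗ[k] BarTerm k A E n)}

lemma comp_mulRight (hΨ : IsOreChainMap σ δ x Ψ) (n : ℕ) (f : E) :
    Ψ n ∘ₗ mulRight k A n f = mulRight k A n f ∘ₗ Ψ n := by
  refine BarTerm.hom_ext fun e a g => ?_
  simp only [LinearMap.comp_apply, mulRight_pure, hΨ n, map_sub, map_sum, mul_assoc]

lemma apply_snoc (hΨ : IsOreChainMap σ δ x Ψ) (e f : E) (a : Fin n → A) (c : A) :
    Ψ (n + 1) (pure k e (Fin.snoc (α := fun _ => A) a c) f) =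
      pure k (e * x) (Fin.snoc (α := fun _ => A) (σ.symm ∘ a) (σ.symm c)) f
      - pure k e (Fin.snoc (α := fun _ => A) a c) (x * f)
      - ∑ j, pure k e (Fin.snoc (α := fun _ => A) (twistAt σ δ a j) (σ.symm c)) f
      - pure k e (Fin.snoc (α := fun _ => A) a (δ (σ.symm c))) f := by
  have hcomp : σ.symm ∘ Fin.snoc (α := fun _ => A) a c =
      Fin.snoc (α := fun _ => A) (σ.symm ∘ a) (σ.symm c) := Fin.comp_snoc _ _ _
  rw [hΨ (n + 1), hcomp, Fin.sum_univ_castSucc, twistAt_snoc_last, ← sub_sub]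
  simp only [twistAt_snoc_castSucc]

lemma apply_pure (hΨ : IsOreChainMap σ δ x Ψ) (h : IsOreExtension k A E σ δ ι x)
    (e : E) (a : Fin n → A) (c : A) (i : ℕ) :
    Ψ n (pure k e a (ι (σ.symm c) * x ^ i)) =
      pure k (e * x) (σ.symm ∘ a) (ι (σ.symm c) * x ^ i)
      - (pure k e a (ι c * x ^ (i + 1)) + pure k e a (ι (δ (σ.symm c)) * x ^ i))
      - ∑ j, pure k e (twistAt σ δ a j) (ι (σ.symm c) * x ^ i) := by
  have hx : x * (ι (σ.symm c) * x ^ i) = ι c * x ^ (i + 1) + ι (δ (σ.symm c)) * x ^ i := by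
    rw [← mul_assoc, h.mul_symm, add_mul, mul_assoc, pow_succ']
  rw [hΨ n, hx, pure_add_right]

lemma comp_homotopy (hΨ : IsOreChainMap σ δ x Ψ) (h : IsOreExtension k A E σ δ ι x) (n : ℕ) :
    Ψ (n + 1) ∘ₗ (h.leftBasis.twist σ.symm).homotopy n = h.leftBasis.homotopy n ∘ₗ Ψ n := by
  refine (h.leftBasis.twist σ.symm).hom_ext fun e a c i => ?_
  have hbasis (e : E) (a : Fin n → A) (c : A) (i : ℕ) :
      h.leftBasis.homotopy n (pure k e a (ι c * x ^ i)) =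
        (-1 : ℤ) ^ (n + 1) • pure k e (Fin.snoc (α := fun _ => A) a c) (x ^ i) :=
    h.leftBasis.homotopy_pure e a c i
  rw [LinearMap.comp_apply, LeftBasis.homotopy_pure, LinearMap.comp_apply, AlgHom.comp_apply,
    AlgEquiv.coe_toAlgHom, LeftBasis.twist_vec, h.leftBasis_vec, map_zsmul, hΨ.apply_snoc,
    hΨ.apply_pure h]
  simp only [map_sub, map_add, map_sum, hbasis, ← Finset.smul_sum, ← pow_succ']
  module

lemma comp_augSection (hΨ : IsOreChainMap σ δ x Ψ) (h : IsOreExtension k A E σ δ ι x) :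
    Ψ 0 ∘ₗ (h.leftBasis.twist σ.symm).augSection = h.leftBasis.augSection ∘ₗ mulSubX k x := by
  refine Finsupp.lhom_ext fun i e => ?_
  rw [LinearMap.comp_apply, LinearMap.comp_apply, mulSubX_single, map_sub,
    LeftBasis.augSection_single _ i e Fin.elim0, LeftBasis.augSection_single _ i (e * x) Fin.elim0,
    LeftBasis.augSection_single _ (i + 1) e Fin.elim0, hΨ 0, Finset.univ_eq_empty,
    Finset.sum_empty, sub_zero, Subsingleton.elim (σ.symm ∘ _) Fin.elim0, LeftBasis.twist_vec,
    h.leftBasis_vec, h.leftBasis_vec, pow_succ']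

lemma aug_comp (hΨ : IsOreChainMap σ δ x Ψ) (h : IsOreExtension k A E σ δ ι x) :
    h.leftBasis.aug ι ∘ₗ Ψ 0 = mulSubX k x ∘ₗ (h.leftBasis.twist σ.symm).aug ι := by
  refine (h.leftBasis.twist σ.symm).hom_ext fun e a c i => ?_
  have hbasis (e : E) (a : Fin 0 → A) (c : A) (i : ℕ) :
      h.leftBasis.aug ι (pure k e a (ι c * x ^ i)) = Finsupp.single i (e * ι c) :=
    h.leftBasis.aug_pure ι e a c i
  rw [LinearMap.comp_apply, LinearMap.comp_apply, LeftBasis.aug_pure, mulSubX_single,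
    AlgHom.comp_apply, AlgEquiv.coe_toAlgHom, LeftBasis.twist_vec, h.leftBasis_vec, hΨ.apply_pure h,
    Finset.univ_eq_empty, Finset.sum_empty, sub_zero, map_sub, map_add, hbasis, hbasis, hbasis,
    mul_assoc e x, h.mul_symm, mul_add, Finsupp.single_add, mul_assoc]
  abel

lemma comm (hΨ : IsOreChainMap σ δ x Ψ) (h : IsOreExtension k A E σ δ ι x)
    {B0 B1 : (n : ℕ) → (BarTerm k A E (n + 1) →ₗ[k] BarTerm k A E n)}
    (hB0 : IsBarDifferential ι ι B0)
    (hB1 : IsBarDifferential ι (ι.comp (σ.symm : A →ₐ[k] A)) B1) (n : ℕ) :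
    B0 n ∘ₗ Ψ (n + 1) = Ψ n ∘ₗ B1 n :=
  (hB1.isContraction (h.leftBasis.twist σ.symm)).comm_of_comm_homotopy
    (P := BarTerm k A E) (P' := BarTerm k A E) (hB0.isContraction h.leftBasis)
    (LeftBasis.homotopy_generatedBy _ h.exists_leftBasis_vec_eq_one) hB1.comp_mulRight
    hB0.comp_mulRight hΨ.comp_mulRight (hΨ.comp_homotopy h) (hΨ.comp_augSection h) (hΨ.aug_comp h) n

end IsOreChainMap

end OreExtension

section Projective

lemma projective_tensorPower (k : Type*) [CommRing k] (A : Type*) [AddCommGroup A] [Module k A]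
    [Module.Projective k A] (n : ℕ) : Module.Projective k (TensorPower k n A) := by
  induction n with
  | zero =>
    exact .of_equiv' (PiTensorProduct.isEmptyEquiv (R := k) (s := fun _ => A) (Fin 0)).symm
  | succ n ih =>
    have hone : Module.Projective k (TensorPower k 1 A) :=
      .of_equiv' (PiTensorProduct.subsingletonEquiv (R := k) (s := fun _ => A) (0 : Fin 1)).symm
    exact .of_equiv' (TensorPower.mulEquiv (R := k) (M := A) (n := n) (m := 1))

variable (k : Type) [CommRing k] (E : Type) [Ring E] [Algebra k E]
  (X : Type) [AddCommGroup X] [Module k X]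

/-- The isomorphism `(e ⊗ zᵒᵖ) ⊗ y ↦ (e ⊗ y) ⊗ z` of the module over `E ⊗ Eᵒᵖ` extended from `X`
with `E ⊗ X ⊗ E`. -/
def tripleEquiv : (E ⊗[k] Eᵐᵒᵖ) ⊗[k] X ≃ₗ[k] (E ⊗[k] X) ⊗[k] E :=
  (TensorProduct.rightComm k E Eᵐᵒᵖ X).trans
    (LinearEquiv.lTensor (E ⊗[k] X) (MulOpposite.opLinearEquiv k).symm)

lemma tripleEquiv_smul (c : E ⊗[k] Eᵐᵒᵖ) (t : (E ⊗[k] Eᵐᵒᵖ) ⊗[k] X) :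
    letI := tripleModule k E X
    tripleEquiv k E X (c • t) = c • tripleEquiv k E X t := by
  have hcommute (e : E) (z : Eᵐᵒᵖ) : Commute (lAlgHom k E X e) (rAlgHom k E X z) := by
    ext t u
    simp [lAlgHom, rAlgHom]
  have hbilin : (Algebra.lsmul k k ((E ⊗[k] Eᵐᵒᵖ) ⊗[k] X)).toLinearMap.compr₂
        (tripleEquiv k E X).toLinearMap =
      (Algebra.TensorProduct.lift _ _ hcommute).toLinearMap.compl₂
        (tripleEquiv k E X).toLinearMap := by
    ext e z e' z' y
    simp [tripleEquiv, lAlgHom, rAlgHom, TensorProduct.smul_tmul']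
  exact LinearMap.congr_fun₂ hbilin c t

lemma projective_triple [Module.Projective k X] :
    letI := tripleModule k E X
    Module.Projective (E ⊗[k] Eᵐᵒᵖ) ((E ⊗[k] X) ⊗[k] E) :=
  letI := tripleModule k E X
  .of_equiv' { tripleEquiv k E X with map_smul' := tripleEquiv_smul k E X }

end Projective

/-- **The Guccione–Guccione resolution of an Ore extension.**
Let `E = A[x;σ,δ]` be an Ore extension with `σ` an automorphism, `b'₀`, `b'₁` the two
bar-type differentials, `ψ'` the Guccione–Guccione chain map, `μ` the multiplication, and
`d` the differential of the mapping cone of `ψ'` (all specified by their values on pure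
tensors; the cone has terms `C₀ = E ⊗ E` and `Cₙ = (E ⊗ A^{⊗(n-1)} ⊗ {}^{σ⁻¹}E) ⊕
(E ⊗ A^{⊗n} ⊗ E)` for `n ≥ 1`, with `d(p, p') = (−b'₁(p), b'₀(p') − ψ'(p))`).
Then the augmented complex `⋯ → C₁ → C₀ → E → 0` is exact; and if moreover `A` is projective
as a `k`-module, each term is a projective `E ⊗ Eᵒᵖ`-module (with the outer structure), i.e.
the cone is a projective resolution of `E` by `E ⊗ Eᵒᵖ`-modules. -/
theorem ore_extension_cone_resolution
    (k : Type) [CommRing k] (A : Type) [Ring A] [Algebra k A]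
    (E : Type) [Ring E] [Algebra k E]
    (σ : A ≃ₐ[k] A) (δ : A →ₗ[k] A) (ι : A →ₐ[k] E) (x : E)
    (hOre : IsOreExtension k A E σ δ ι x)
    (B0 B1 : (n : ℕ) → (BarObj k A E (n + 1) →ₗ[k] BarObj k A E n))
    (Ψ : (n : ℕ) → (BarObj k A E n →ₗ[k] BarObj k A E n))
    (μ : BarObj k A E 0 →ₗ[k] E)
    (d1 : BarObj k A E 0 × BarObj k A E 1 →ₗ[k] BarObj k A E 0)
    (d : (n : ℕ) →
      (BarObj k A E (n + 1) × BarObj k A E (n + 2) →ₗ[k]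
        BarObj k A E n × BarObj k A E (n + 1)))
    (hB0 : ∀ (n : ℕ) (e f : E) (a : Fin (n + 1) → A),
      B0 n ((e ⊗ₜ[k] PiTensorProduct.tprod k a) ⊗ₜ[k] f) =
        ((e * ι (a 0)) ⊗ₜ[k] PiTensorProduct.tprod k (fun j : Fin n => a j.succ)) ⊗ₜ[k] f
        + ∑ i : Fin n, ((-1 : ℤ) ^ ((i : ℕ) + 1)) •
            ((e ⊗ₜ[k] PiTensorProduct.tprod k (mergeAt a i)) ⊗ₜ[k] f)
        + ((-1 : ℤ) ^ (n + 1)) •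
            ((e ⊗ₜ[k] PiTensorProduct.tprod k (fun j : Fin n => a j.castSucc)) ⊗ₜ[k]
              (ι (a (Fin.last n)) * f)))
    (hB1 : ∀ (n : ℕ) (e f : E) (a : Fin (n + 1) → A),
      B1 n ((e ⊗ₜ[k] PiTensorProduct.tprod k a) ⊗ₜ[k] f) =
        ((e * ι (a 0)) ⊗ₜ[k] PiTensorProduct.tprod k (fun j : Fin n => a j.succ)) ⊗ₜ[k] f
        + ∑ i : Fin n, ((-1 : ℤ) ^ ((i : ℕ) + 1)) •
            ((e ⊗ₜ[k] PiTensorProduct.tprod k (mergeAt a i)) ⊗ₜ[k] f)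
        + ((-1 : ℤ) ^ (n + 1)) •
            ((e ⊗ₜ[k] PiTensorProduct.tprod k (fun j : Fin n => a j.castSucc)) ⊗ₜ[k]
              (ι (σ.symm (a (Fin.last n))) * f)))
    (hΨ : ∀ (n : ℕ) (e f : E) (a : Fin n → A),
      Ψ n ((e ⊗ₜ[k] PiTensorProduct.tprod k a) ⊗ₜ[k] f) =
        ((e * x) ⊗ₜ[k] PiTensorProduct.tprod k (fun i : Fin n => σ.symm (a i))) ⊗ₜ[k] f
        - (e ⊗ₜ[k] PiTensorProduct.tprod k a) ⊗ₜ[k] (x * f)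
        - ∑ j : Fin n, (e ⊗ₜ[k] PiTensorProduct.tprod k (fun i : Fin n =>
            if (i : ℕ) < (j : ℕ) then a i
            else if i = j then δ (σ.symm (a j))
            else σ.symm (a i))) ⊗ₜ[k] f)
    (hμ : ∀ (e f : E) (a : Fin 0 → A),
      μ ((e ⊗ₜ[k] PiTensorProduct.tprod k a) ⊗ₜ[k] f) = e * f)
    (hd1 : ∀ (p : BarObj k A E 0) (p' : BarObj k A E 1),
      d1 (p, p') = B0 0 p' - Ψ 0 p)
    (hd : ∀ (n : ℕ) (p : BarObj k A E (n + 1)) (p' : BarObj k A E (n + 2)),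
      d n (p, p') = (-(B1 n p), B0 (n + 1) p' - Ψ (n + 1) p)) :
    Function.Surjective ⇑μ ∧
      Function.Exact ⇑d1 ⇑μ ∧
      Function.Exact ⇑(d 0) ⇑d1 ∧
      (∀ n : ℕ, Function.Exact ⇑(d (n + 1)) ⇑(d n)) ∧
      (Module.Projective k A →
        ∀ n : ℕ,
          @Module.Projective (E ⊗[k] Eᵐᵒᵖ) _ (BarObj k A E n) _
            (tripleModule k E (TensorPower k n A))) := by
  have hB0' : IsBarDifferential ι ι B0 := hB0
  have hB1' : IsBarDifferential ι (ι.comp (σ.symm : A →ₐ[k] A)) B1 := hB1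
  have hΨ' : IsOreChainMap σ δ x Ψ := hΨ
  have hvec := hOre.exists_leftBasis_vec_eq_one
  have hP := hB1'.isResolution (hOre.leftBasis.twist σ.symm) hvec
  have hQ := hB0'.isResolution hOre.leftBasis hvec
  have hcomm n := LinearMap.congr_fun (hΨ'.comm hOre hB0' hB1' n)
  have hε := LinearMap.congr_fun (hΨ'.aug_comp hOre)
  obtain rfl : d1 = coneDOne (P := BarTerm k A E) (Q := BarTerm k A E) B0 Ψ :=
    LinearMap.ext fun ⟨p, p'⟩ => hd1 p p'
  obtain rfl : d = coneD (P := BarTerm k A E) (Q := BarTerm k A E) B1 B0 Ψ :=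
    funext fun n => LinearMap.ext fun ⟨p, p'⟩ => hd n p p'
  obtain rfl := hOre.evalCoeffs_comp_aug hμ
  refine ⟨(evalCoeffs_surjective k x).comp hQ.surjective,
    coneDOne_exact_aug hP.surjective hQ.exact_zero hε (mulSubX_exact_evalCoeffs k x),
    coneD_zero_exact hP.exact_zero hQ.exact_zero (hQ.exact_succ 0) (hcomm 0) hε
      (mulSubX_injective k x),
    fun n => coneD_succ_exact (hP.exact_succ n) (hQ.exact_succ (n + 1)) (hcomm (n + 1)),
    fun _ n => ?_⟩
  have := projective_tensorPower k A n
  exact projective_triple k E (TensorPower k n A)
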